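/- Let N₁ ⊆ {1,…,N} be a set of cached files with Σ_{n∈N₁} F_n > 0, let M be a cache size with 0 ≤ M ≤ Σ_{n∈N₁} F_n, and consider the PF-SA placement q_n = c := M / Σ_{n'∈N₁} F_{n'} for n ∈ N₁ and q_n = 0 for n ∉ N₁. For an active set A with demand map d, let A₁ = {k ∈ A : d_k ∈ N₁} and A₂ = A \ A₁. Then for every leader group U, the D-MCCS delivery rate decomposes as R_MCCS(d; q) = Σ_{S ⊆ A, S ∩ U ≠ ∅, S ∩ A₁ ≠ ∅} c^{|S|−1} (1 − c)^{|A|−|S|+1} · max_{k ∈ S ∩ A₁} F_{d_k} + Σ_{n ∈ {d_k : k ∈ A₂}} F_n, where the first sum is over non-redundant groups containing at least one user requesting a cached file (and the maximum is taken over such users) and the second sum is over the distinct uncached files requested. -/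

import Mathlib

/-!
In a group with at least two users every coded piece carries a positive power of the cache fraction,
so a user requesting an uncached file contributes nothing there; if the group also contains users
requesting cached files, the maximum may be restricted to the latter. A group consisting only of
users requesting uncached files therefore contributes nothing unless it is a singleton `{k}`, and
then it contributes the whole file `F (d k)`. The non-redundant singletons are those with `k` a
leader, and the leaders represent every requested file exactly once.
-/

open Finset

/-- Maximum of a real-valued function over a finite set (`0` if the set is empty). -/
noncomputable def maxOver {α : Type*} (S : Finset α) (f : α → ℝ) : ℝ :=
  if h : S.Nonempty then S.sup' h f else 0

/-- The D-MCCS delivery rate: the sum, over nonempty subsets `S ⊆ A` with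
`S ∩ U ≠ ∅` (the non-redundant groups), of
`max_{k ∈ S} q_{d_k}^{|S|−1} (1 − q_{d_k})^{|A|−|S|+1} F_{d_k}`. -/
noncomputable def R_MCCS {α : Type*} [DecidableEq α] {N : ℕ} (A U : Finset α)
    (d : α → Fin N) (q F : Fin N → ℝ) : ℝ :=
  ∑ S ∈ A.powerset.filter (fun S => (S ∩ U).Nonempty),
    maxOver S (fun k =>
      q (d k) ^ (S.card - 1) * (1 - q (d k)) ^ (A.card - S.card + 1) * F (d k))

/-- The lower-bound rate: the maximum over bijections `π : {1,…,|D|} → D` of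
`Σ_{s=0}^{|A|−1} Σ_{i=1}^{|D|} C(|A|−i, s) q_{π(i)}^s (1 − q_{π(i)})^{|A|−s} F_{π(i)}`,
where `Acard = |A|`. -/
noncomputable def R_lb {N : ℕ} (Acard : ℕ) (D : Finset (Fin N))
    (q F : Fin N → ℝ) : ℝ :=
  ⨆ π : Fin D.card ≃ {x : Fin N // x ∈ D},
    ∑ s ∈ Finset.range Acard, ∑ i : Fin D.card,
      ((Acard - (i.1 + 1)).choose s : ℝ) * q (π i).1 ^ s *
        (1 - q (π i).1) ^ (Acard - s) * F (π i).1

/-- `U` is a leader group for active set `A` with demand map `d`: `U ⊆ A`, the demand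
map is injective on `U`, and the users in `U` request exactly the distinct files
requested by the users in `A`. -/
def IsLeaderGroup {α : Type*} [DecidableEq α] {N : ℕ} (A U : Finset α)
    (d : α → Fin N) : Prop :=
  U ⊆ A ∧ Set.InjOn d ↑U ∧ U.image d = A.image d

section MaxOver

variable {α : Type*} {S T : Finset α} {f g : α → ℝ}

lemma maxOver_singleton (k : α) (f : α → ℝ) : maxOver {k} f = f k := by
  simp [maxOver]

lemma maxOver_congr (hfg : ∀ k ∈ S, f k = g k) : maxOver S f = maxOver S g := by
  unfold maxOver
  split_ifs with hS
  · exact sup'_congr hS rfl hfg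
  · rfl

lemma maxOver_const_mul {a : ℝ} (ha : 0 ≤ a) (S : Finset α) (f : α → ℝ) :
    maxOver S (fun k => a * f k) = a * maxOver S f := by
  unfold maxOver
  split_ifs with hS
  · exact (mul₀_sup' ha f S hS).symm
  · exact (mul_zero a).symm

lemma maxOver_eq_zero (hf : ∀ k ∈ S, f k = 0) : maxOver S f = 0 := by
  rw [maxOver_congr hf]
  simp [maxOver]

lemma le_maxOver {k : α} (hk : k ∈ S) (f : α → ℝ) : f k ≤ maxOver S f := by
  rw [maxOver, dif_pos ⟨k, hk⟩]
  exact le_sup' f hk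

lemma maxOver_le (hS : S.Nonempty) {a : ℝ} (hf : ∀ k ∈ S, f k ≤ a) : maxOver S f ≤ a := by
  rw [maxOver, dif_pos hS]
  exact sup'_le hS f hf

lemma maxOver_subset (hTS : T ⊆ S) (hT : T.Nonempty) (hnonneg : ∀ k ∈ T, 0 ≤ f k)
    (hnonpos : ∀ k ∈ S, k ∉ T → f k ≤ 0) : maxOver T f = maxOver S f := by
  apply le_antisymm
  · exact maxOver_le hT fun k hk => le_maxOver (hTS hk) f
  · refine maxOver_le (hT.mono hTS) fun k hk => ?_
    by_cases hkT : k ∈ T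
    · exact le_maxOver hkT f
    · obtain ⟨j, hj⟩ := hT
      exact (hnonpos k hk hkT).trans ((hnonneg j hj).trans (le_maxOver hj f))

end MaxOver

section SubfileSize

/-- The size `p^(s-1) (1-p)^(m-s+1) f` of the piece that a group of `s` among `m` active users
delivers to one of its members, who requests a file of size `f` cached in fraction `p`: the part of
the file cached by exactly the other `s - 1` members. Intended for `1 ≤ s ≤ m`, where neither
subtraction truncates. -/
noncomputable def subfileSize (m s : ℕ) (p f : ℝ) : ℝ :=
  p ^ (s - 1) * (1 - p) ^ (m - s + 1) * f

lemma subfileSize_nonneg (m s : ℕ) {p f : ℝ} (hp : p ∈ Set.Icc 0 1) (hf : 0 ≤ f) :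
    0 ≤ subfileSize m s p f :=
  mul_nonneg (mul_nonneg (pow_nonneg hp.1 _) (pow_nonneg (sub_nonneg.2 hp.2) _)) hf

lemma subfileSize_one_uncached (m : ℕ) (f : ℝ) : subfileSize m 1 0 f = f := by
  simp [subfileSize]

lemma subfileSize_uncached_of_one_lt (m : ℕ) {s : ℕ} (hs : 1 < s) (f : ℝ) :
    subfileSize m s 0 f = 0 := by
  simp [subfileSize, zero_pow (Nat.sub_pos_of_lt hs).ne']

lemma maxOver_subfileSize_of_const {α : Type*} {T : Finset α} {p : α → ℝ} (m s : ℕ) {c : ℝ}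
    (hc : c ∈ Set.Icc 0 1) (hp : ∀ k ∈ T, p k = c) (f : α → ℝ) :
    maxOver T (fun k => subfileSize m s (p k) (f k))
      = c ^ (s - 1) * (1 - c) ^ (m - s + 1) * maxOver T f := by
  have hfactor : 0 ≤ c ^ (s - 1) * (1 - c) ^ (m - s + 1) :=
    mul_nonneg (pow_nonneg hc.1 _) (pow_nonneg (sub_nonneg.2 hc.2) _)
  rw [← maxOver_const_mul hfactor]
  exact maxOver_congr fun k hk => by rw [hp k hk, subfileSize]

variable {α : Type*} [DecidableEq α] {p f : α → ℝ}

lemma maxOver_subfileSize_inter (m : ℕ) {S T : Finset α} (hST : (S ∩ T).Nonempty)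
    (hp : ∀ k ∈ T, p k ∈ Set.Icc 0 1) (hf : ∀ k ∈ T, 0 ≤ f k)
    (hp₀ : ∀ k ∈ S, k ∉ T → p k = 0) :
    maxOver (S ∩ T) (fun k => subfileSize m #S (p k) (f k))
      = maxOver S (fun k => subfileSize m #S (p k) (f k)) := by
  refine maxOver_subset inter_subset_left hST (fun k hk => ?_) (fun k hkS hkT => ?_)
  · have hkT : k ∈ T := (mem_inter.1 hk).2
    exact subfileSize_nonneg m #S (hp k hkT) (hf k hkT)
  · obtain ⟨j, hj⟩ := hST
    have hcard : 1 < #S :=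
      one_lt_card.2 ⟨k, hkS, j, (mem_inter.1 hj).1, fun hkj => hkT (hkj ▸ hj)⟩
    rw [hp₀ k hkS fun hk => hkT (mem_inter.2 ⟨hkS, hk⟩), subfileSize_uncached_of_one_lt m hcard]

lemma sum_maxOver_subfileSize_uncached (m : ℕ) (B U : Finset α) (hp₀ : ∀ k ∈ B, p k = 0) :
    ∑ S ∈ B.powerset with (S ∩ U).Nonempty, maxOver S (fun k => subfileSize m #S (p k) (f k))
      = ∑ k ∈ B ∩ U, f k := by
  symm
  refine sum_of_injOn (fun k => {k}) singleton_injective.injOn (fun k hk => ?_)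
    (fun S hS hS_singleton => ?_) (fun k hk => ?_)
  · obtain ⟨hkB, hkU⟩ := mem_inter.1 hk
    simp [hkB, hkU]
  · obtain ⟨hSB, u, hu⟩ := mem_filter.1 hS
    rw [mem_powerset] at hSB
    obtain ⟨huS, huU⟩ := mem_inter.1 hu
    have hS_ne : S ≠ {u} := fun hSu => hS_singleton ⟨u, mem_inter.2 ⟨hSB huS, huU⟩, hSu.symm⟩
    have hcard : 1 < #S :=
      one_lt_card_iff_nontrivial.2 ((nontrivial_iff_ne_singleton huS).2 hS_ne)
    refine maxOver_eq_zero fun k hk => ?_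
    rw [hp₀ k (hSB hk), subfileSize_uncached_of_one_lt m hcard]
  · rw [maxOver_singleton, card_singleton, hp₀ k (mem_inter.1 hk).1, subfileSize_one_uncached]

end SubfileSize

namespace IsLeaderGroup

variable {α : Type*} [DecidableEq α] {N : ℕ} {A U : Finset α} {d : α → Fin N}

lemma filter (hU : IsLeaderGroup A U d) (P : Fin N → Prop) [DecidablePred P] :
    IsLeaderGroup {k ∈ A | P (d k)} {k ∈ U | P (d k)} d := by
  obtain ⟨hUA, hinj, himage⟩ := hU
  refine ⟨filter_subset_filter _ hUA, hinj.mono (filter_subset _ U), ?_⟩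
  rw [← filter_image, ← filter_image, himage]

lemma sum_comp (hU : IsLeaderGroup A U d) (F : Fin N → ℝ) :
    ∑ k ∈ U, F (d k) = ∑ n ∈ A.image d, F n := by
  rw [← hU.2.2, sum_image hU.2.1]

end IsLeaderGroup

section RateDecomposition

variable {α : Type*} [DecidableEq α] {N : ℕ} {A U : Finset α} {d : α → Fin N}
  {F q : Fin N → ℝ} {N₁ : Finset (Fin N)}

lemma filter_powerset_inter_nonempty_and_not (A U : Finset α) (P : α → Prop) [DecidablePred P] :
    {S ∈ A.powerset | (S ∩ U).Nonempty ∧ ¬(S ∩ {k ∈ A | P k}).Nonempty}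
      = {S ∈ ({k ∈ A | ¬P k} : Finset α).powerset | (S ∩ U).Nonempty} := by
  ext S
  simp only [mem_filter, mem_powerset, subset_iff, Finset.Nonempty, mem_inter]
  grind

theorem rate_decomposition_PFSA_general (hF : ∀ n ∈ N₁, 0 ≤ F n)
    (hq : ∀ n ∈ N₁, q n ∈ Set.Icc 0 1) (hq₀ : ∀ n ∉ N₁, q n = 0) (hU : IsLeaderGroup A U d) :
    R_MCCS A U d q F
      = (∑ S ∈ A.powerset with (S ∩ U).Nonempty ∧ (S ∩ {k ∈ A | d k ∈ N₁}).Nonempty,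
          maxOver (S ∩ {k ∈ A | d k ∈ N₁}) (fun k => subfileSize #A #S (q (d k)) (F (d k))))
        + ∑ n ∈ ({k ∈ A | d k ∉ N₁} : Finset α).image d, F n := by
  unfold R_MCCS
  rw [← sum_filter_add_sum_filter_not _ (fun S => (S ∩ {k ∈ A | d k ∈ N₁}).Nonempty),
    filter_filter, filter_filter, filter_powerset_inter_nonempty_and_not]
  congr 1
  · refine sum_congr rfl fun S hS => ?_
    obtain ⟨hSA, -, hS_cached⟩ := mem_filter.1 hS
    have huncached : ∀ k ∈ S, k ∉ ({k ∈ A | d k ∈ N₁} : Finset α) → q (d k) = 0 :=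
      fun k hkS hk => hq₀ _ fun hdk => hk (mem_filter.2 ⟨mem_powerset.1 hSA hkS, hdk⟩)
    exact (maxOver_subfileSize_inter #A hS_cached (fun k hk => hq _ (mem_filter.1 hk).2)
      (fun k hk => hF _ (mem_filter.1 hk).2) huncached).symm
  · calc ∑ S ∈ ({k ∈ A | d k ∉ N₁} : Finset α).powerset with (S ∩ U).Nonempty,
          maxOver S (fun k => subfileSize #A #S (q (d k)) (F (d k)))
        = ∑ k ∈ {k ∈ A | d k ∉ N₁} ∩ U, F (d k) :=
          sum_maxOver_subfileSize_uncached #A _ U fun k hk => hq₀ _ (mem_filter.1 hk).2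
      _ = ∑ k ∈ U with d k ∉ N₁, F (d k) := by
          rw [filter_inter, inter_eq_right.2 hU.1]
      _ = ∑ n ∈ ({k ∈ A | d k ∉ N₁} : Finset α).image d, F n :=
          (hU.filter (· ∉ N₁)).sum_comp F

end RateDecomposition

/-- PF-SA placement: files in `N₁` are each cached in fraction
`c = M / Σ_{n∈N₁} F_n` and the remaining files are uncached. With
`A₁ = {k ∈ A : d_k ∈ N₁}` and `A₂ = A \ A₁`, the D-MCCS rate decomposes as the sum,
over non-redundant groups `S` containing at least one user requesting a cached file,
of `c^{|S|−1} (1 − c)^{|A|−|S|+1} max_{k ∈ S ∩ A₁} F_{d_k}`, plus the total size of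
the distinct uncached files requested. -/
theorem rate_decomposition_PFSA {α : Type*} [DecidableEq α] {N : ℕ}
    (F : Fin N → ℝ) (hF : ∀ n, 0 ≤ F n)
    (N₁ : Finset (Fin N)) (hN₁ : 0 < ∑ n ∈ N₁, F n)
    (M : ℝ) (hM0 : 0 ≤ M) (hM1 : M ≤ ∑ n ∈ N₁, F n)
    (c : ℝ) (hc : c = M / ∑ n ∈ N₁, F n)
    (q : Fin N → ℝ) (hq : ∀ n, q n = if n ∈ N₁ then c else 0)
    (A U : Finset α) (d : α → Fin N) (hU : IsLeaderGroup A U d)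
    (A₁ A₂ : Finset α) (hA₁ : A₁ = A.filter (fun k => d k ∈ N₁)) (hA₂ : A₂ = A \ A₁) :
    R_MCCS A U d q F
      = (∑ S ∈ A.powerset.filter (fun S => (S ∩ U).Nonempty ∧ (S ∩ A₁).Nonempty),
          c ^ (S.card - 1) * (1 - c) ^ (A.card - S.card + 1) *
            maxOver (S ∩ A₁) (fun k => F (d k)))
        + ∑ n ∈ A₂.image d, F n := by
  have hc01 : c ∈ Set.Icc 0 1 := hc ▸ ⟨div_nonneg hM0 hN₁.le, (div_le_one hN₁).2 hM1⟩
  have hq₁ : ∀ n ∈ N₁, q n = c := fun n hn => by rw [hq, if_pos hn]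
  have hq₀ : ∀ n ∉ N₁, q n = 0 := fun n hn => by rw [hq, if_neg hn]
  subst hA₁ hA₂
  rw [rate_decomposition_PFSA_general (fun n _ => hF n) (fun n hn => hq₁ n hn ▸ hc01) hq₀ hU,
    filter_not]
  congr 1
  refine sum_congr rfl fun S _ => maxOver_subfileSize_of_const #A #S hc01
    (fun k hk => hq₁ _ (mem_filter.1 (mem_inter.1 hk).2).2) _
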